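/- arXiv:1412.2681 — 7 statements merged into one kernel-verified Lean document; each statement's English description precedes it below -/
import Mathlib

section
/- Exact recovery of Cauchy points from the first row and column (correctness of Algorithm 1): let A = [a_{ij}] = C(s,t) ∈ ℂ^{m,n} be a Cauchy matrix. Define s' ∈ ℂ^m and t' ∈ ℂ^n by s'_1 = 0, t'_j = s'_1 − 1/a_{1j} for 1 ≤ j ≤ n, and s'_i = t'_1 + 1/a_{i1} for 2 ≤ i ≤ m. Then s', t' are Cauchy points and A = C(s',t'). -/
theorem sub_eq_sub_of_row_of_col {ι κ G : Type*} [AddCommGroup G] {s s' : ι → G} {t t' : κ → G}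
    {i₀ : ι} {j₀ : κ} (hrow : ∀ j, s' i₀ - t' j = s i₀ - t j)
    (hcol : ∀ i, s' i - t' j₀ = s i - t j₀) (i : ι) (j : κ) :
    s' i - t' j = s i - t j :=
  calc
    s' i - t' j = (s' i - t' j₀) - (s' i₀ - t' j₀) + (s' i₀ - t' j) := by abel
    _ = (s i - t j₀) - (s i₀ - t j₀) + (s i₀ - t j) := by rw [hcol i, hrow j₀, hrow j]
    _ = s i - t j := by abel

theorem algorithm1_correct_general {ι κ K : Type*} [DivisionRing K] (i₀ : ι) (j₀ : κ)
    (s : ι → K) (t : κ → K) (hst : ∀ i j, s i - t j ≠ 0)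
    (A : Matrix ι κ K) (hA : ∀ i j, A i j = (s i - t j)⁻¹)
    (s' : ι → K) (t' : κ → K)
    (ht' : ∀ j, t' j = s' i₀ - (A i₀ j)⁻¹)
    (hs' : ∀ i, i ≠ i₀ → s' i = t' j₀ + (A i j₀)⁻¹) :
    (∀ i j, s' i - t' j ≠ 0) ∧ ∀ i j, A i j = (s' i - t' j)⁻¹ := by
  have inv_entry (i j) : (A i j)⁻¹ = s i - t j := by rw [hA, inv_inv]
  have hrow (j) : s' i₀ - t' j = s i₀ - t j := by rw [ht', sub_sub_cancel, inv_entry]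
  have hcol (i) : s' i - t' j₀ = s i - t j₀ := by
    rcases eq_or_ne i i₀ with rfl | hi
    · exact hrow j₀
    · rw [hs' i hi, add_sub_cancel_left, inv_entry]
  have hsub := sub_eq_sub_of_row_of_col hrow hcol
  exact ⟨fun i j ↦ hsub i j ▸ hst i j, fun i j ↦ hsub i j ▸ hA i j⟩

/-- Correctness of Algorithm 1 (exact recovery of Cauchy points from the first
row and column): if `A = C(s,t)` is a Cauchy matrix and `s', t'` are defined by
`s'_1 = 0`, `t'_j = s'_1 − 1/a_{1j}`, and `s'_i = t'_1 + 1/a_{i1}` for `i ≥ 2`,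
then `s', t'` are Cauchy points with `A = C(s',t')`. -/
theorem algorithm1_correct (m n : ℕ) (hm : 0 < m) (hn : 0 < n)
    (s : Fin m → ℂ) (t : Fin n → ℂ) (hst : ∀ i j, s i - t j ≠ 0)
    (A : Matrix (Fin m) (Fin n) ℂ) (hA : ∀ i j, A i j = (s i - t j)⁻¹)
    (s' : Fin m → ℂ) (t' : Fin n → ℂ)
    (hs'0 : s' ⟨0, hm⟩ = 0)
    (ht' : ∀ j, t' j = s' ⟨0, hm⟩ - (A ⟨0, hm⟩ j)⁻¹)
    (hs' : ∀ i : Fin m, i ≠ ⟨0, hm⟩ → s' i = t' ⟨0, hn⟩ + (A i ⟨0, hn⟩)⁻¹) :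
    (∀ i j, s' i - t' j ≠ 0) ∧ ∀ i j, A i j = (s' i - t' j)⁻¹ :=
  algorithm1_correct_general ⟨0, hm⟩ ⟨0, hn⟩ s t hst A hA s' t' ht' hs'
end

section
/- Eigenvector characterization of U Uᵀ (squares of the left singular vectors of U): (i) U Uᵀ 1_{mn} = (m+n)·1_{mn}; (ii) for every v ∈ ℂ^n with 1_nᵀ v = 0, U Uᵀ (1_m ⊗ v) = m·(1_m ⊗ v); (iii) for every v ∈ ℂ^m with 1_mᵀ v = 0, U Uᵀ (v ⊗ 1_n) = n·(v ⊗ 1_n). -/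
open Matrix

/-- The matrix `U = [I_m ⊗ 1_n, −1_m ⊗ I_n]`: rows indexed by pairs `(i,j)`,
columns by `Fin m ⊕ Fin n`, so that `(U z)_{(i,j)} = s_i − t_j` for `z = [s; t]`. -/
def Umat (m n : ℕ) : Matrix (Fin m × Fin n) (Fin m ⊕ Fin n) ℂ :=
  fun p => Sum.elim (fun k => if k = p.1 then 1 else 0) (fun l => if l = p.2 then -1 else 0)

/-- The matrix of `z ↦ (z (inl i) - z (inr j))_{(i, j)}`, i.e. the oriented edge-vertex incidence
matrix of the complete bipartite graph on `ι ⊕ κ`. It is `Umat` for arbitrary finite index types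
and arbitrary coefficients. -/
def differenceMatrix (R ι κ : Type*) [Ring R] [DecidableEq ι] [DecidableEq κ] :
    Matrix (ι × κ) (ι ⊕ κ) R :=
  of fun p => Sum.elim (Pi.single p.1 1) (-Pi.single p.2 1)

section differenceMatrix

variable {R ι κ : Type*} [Ring R] [Fintype ι] [Fintype κ] [DecidableEq ι] [DecidableEq κ]

theorem differenceMatrix_mulVec (z : ι ⊕ κ → R) :
    differenceMatrix R ι κ *ᵥ z = fun p => z (.inl p.1) - z (.inr p.2) := by
  ext p
  simp [differenceMatrix, mulVec, dotProduct, Pi.single_apply, sub_eq_add_neg]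

theorem differenceMatrix_transpose_mulVec (w : ι × κ → R) :
    (differenceMatrix R ι κ)ᵀ *ᵥ w =
      Sum.elim (fun i => ∑ j, w (i, j)) (fun j => -∑ i, w (i, j)) := by
  ext (i | j)
  · simp [differenceMatrix, mulVec, dotProduct, Pi.single_apply, Fintype.sum_prod_type_right]
  · simp [differenceMatrix, mulVec, dotProduct, Pi.single_apply, Fintype.sum_prod_type]

theorem differenceMatrix_mul_transpose_mulVec (w : ι × κ → R) :
    (differenceMatrix R ι κ * (differenceMatrix R ι κ)ᵀ) *ᵥ w =
      fun p => ∑ j, w (p.1, j) + ∑ i, w (i, p.2) := by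
  rw [← mulVec_mulVec, differenceMatrix_transpose_mulVec, differenceMatrix_mulVec]
  simp only [Sum.elim_inl, Sum.elim_inr, sub_neg_eq_add]

variable (R ι κ) in
theorem eigen_UUt_general :
    ((differenceMatrix R ι κ * (differenceMatrix R ι κ)ᵀ) *ᵥ (fun _ => 1) =
      ((Fintype.card ι : R) + Fintype.card κ) • fun _ => (1 : R)) ∧
    (∀ v : κ → R, ∑ j, v j = 0 →
      (differenceMatrix R ι κ * (differenceMatrix R ι κ)ᵀ) *ᵥ (fun p => v p.2) =
        (Fintype.card ι : R) • fun p : ι × κ => v p.2) ∧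
    (∀ v : ι → R, ∑ i, v i = 0 →
      (differenceMatrix R ι κ * (differenceMatrix R ι κ)ᵀ) *ᵥ (fun p => v p.1) =
        (Fintype.card κ : R) • fun p : ι × κ => v p.1) := by
  simp only [differenceMatrix_mul_transpose_mulVec]
  refine ⟨?_, fun v hv => ?_, fun v hv => ?_⟩ <;> ext p
  · simp [add_comm]
  · simp [hv]
  · simp [hv]

end differenceMatrix

theorem Umat_eq_differenceMatrix (m n : ℕ) : Umat m n = differenceMatrix ℂ (Fin m) (Fin n) := by
  ext p (k | l) <;> simp [Umat, differenceMatrix, Pi.single_apply, neg_ite]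

/-- Eigenvector characterization of `U Uᵀ`:
(i) the all-ones vector `1_{mn}` is an eigenvector for eigenvalue `m+n`;
(ii) `1_m ⊗ v` with `1_nᵀ v = 0` is an eigenvector for eigenvalue `m`;
(iii) `v ⊗ 1_n` with `1_mᵀ v = 0` is an eigenvector for eigenvalue `n`. -/
theorem eigen_UUt (m n : ℕ) (hm : 0 < m) (hn : 0 < n) :
    ((Umat m n * (Umat m n)ᵀ).mulVec (fun _ => 1) =
      ((m : ℂ) + n) • fun _ => (1 : ℂ)) ∧
    (∀ v : Fin n → ℂ, (∑ j, v j) = 0 →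
      (Umat m n * (Umat m n)ᵀ).mulVec (fun p => v p.2) =
        (m : ℂ) • fun p : Fin m × Fin n => v p.2) ∧
    (∀ v : Fin m → ℂ, (∑ i, v i) = 0 →
      (Umat m n * (Umat m n)ᵀ).mulVec (fun p => v p.1) =
        (n : ℂ) • fun p : Fin m × Fin n => v p.1) := by
  simpa only [Umat_eq_differenceMatrix, Fintype.card_fin] using
    eigen_UUt_general ℂ (Fin m) (Fin n)
end

section
/- The largest singular value of U equals √(m+n): for every z ∈ ℂ^{m+n} one has ‖Uz‖₂ ≤ √(m+n)·‖z‖₂, and there exists a nonzero z for which equality holds (e.g., z = [n·1_m; −m·1_n]). -/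
/-!
`‖Uz‖²` is the Dirichlet energy `∑ ‖s i - t j‖²` of `z = [s; t]` over the edges of the complete
bipartite graph `K_{m,n}`. Adding the missing edges inside the two parts gives the energy of the
complete graph on `m + n` vertices, which equals `(m + n) ‖z‖² - ‖∑ q, z q‖²`. Hence
`‖Uz‖² ≤ (m + n) ‖z‖²`, with equality as soon as `s` and `t` are constant and the entries of `z`
sum to zero.
-/

open Matrix

open Finset Sum

section Energy

variable {ι κ E : Type*} [Fintype ι] [Fintype κ]

theorem sum_sum_norm_sub_sq [SeminormedAddCommGroup E] [InnerProductSpace ℝ E] (z : ι → E) :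
    ∑ i, ∑ j, ‖z i - z j‖ ^ 2 =
      2 * (Fintype.card ι * ∑ i, ‖z i‖ ^ 2 - ‖∑ i, z i‖ ^ 2) := by
  simp only [norm_sub_sq_real, sum_add_distrib, sum_sub_distrib, ← mul_sum, ← inner_sum,
    ← sum_inner, real_inner_self_eq_norm_sq, sum_const, card_univ, nsmul_eq_mul]
  ring

theorem sum_sum_norm_sub_sq_sum_type [SeminormedAddCommGroup E] (z : ι ⊕ κ → E) :
    ∑ q, ∑ r, ‖z q - z r‖ ^ 2 =
      2 * ∑ i, ∑ j, ‖z (inl i) - z (inr j)‖ ^ 2 +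
        (∑ i, ∑ i', ‖z (inl i) - z (inl i')‖ ^ 2 +
          ∑ j, ∑ j', ‖z (inr j) - z (inr j')‖ ^ 2) := by
  have swap_blocks : ∑ j, ∑ i, ‖z (inr j) - z (inl i)‖ ^ 2 =
      ∑ i, ∑ j, ‖z (inl i) - z (inr j)‖ ^ 2 := by
    rw [sum_comm]
    simp only [norm_sub_rev]
  simp only [Fintype.sum_sum_type, sum_add_distrib, swap_blocks]
  ring

variable [SeminormedAddCommGroup E] [InnerProductSpace ℝ E]

theorem sum_sum_norm_inl_sub_inr_sq (z : ι ⊕ κ → E) :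
    ∑ i, ∑ j, ‖z (inl i) - z (inr j)‖ ^ 2 =
      (Fintype.card ι + Fintype.card κ) * ∑ q, ‖z q‖ ^ 2 -
        (‖∑ q, z q‖ ^ 2 +
          (∑ i, ∑ i', ‖z (inl i) - z (inl i')‖ ^ 2 +
            ∑ j, ∑ j', ‖z (inr j) - z (inr j')‖ ^ 2) / 2) := by
  have complete := sum_sum_norm_sub_sq z
  rw [sum_sum_norm_sub_sq_sum_type, Fintype.card_sum, Nat.cast_add] at complete
  linarith

theorem sum_sum_norm_inl_sub_inr_sq_le (z : ι ⊕ κ → E) :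
    ∑ i, ∑ j, ‖z (inl i) - z (inr j)‖ ^ 2 ≤
      (Fintype.card ι + Fintype.card κ) * ∑ q, ‖z q‖ ^ 2 := by
  rw [sum_sum_norm_inl_sub_inr_sq]
  exact sub_le_self _ (by positivity)

theorem sum_sum_norm_sub_sq_eq_of_card_smul_add_eq_zero {a b : E}
    (h : Fintype.card ι • a + Fintype.card κ • b = 0) :
    ∑ _i : ι, ∑ _j : κ, ‖a - b‖ ^ 2 =
      (Fintype.card ι + Fintype.card κ) *
        ∑ q, ‖Sum.elim (fun _ : ι ↦ a) (fun _ : κ ↦ b) q‖ ^ 2 := by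
  simpa [Fintype.sum_sum_type, h] using
    sum_sum_norm_inl_sub_inr_sq (Sum.elim (fun _ : ι ↦ a) (fun _ : κ ↦ b))

end Energy

theorem Umat_mulVec_apply (m n : ℕ) (z : Fin m ⊕ Fin n → ℂ) (p : Fin m × Fin n) :
    (Umat m n *ᵥ z) p = z (inl p.1) - z (inr p.2) := by
  simp [mulVec, dotProduct, Umat, sub_eq_add_neg]

theorem sum_norm_Umat_mulVec_sq (m n : ℕ) (z : Fin m ⊕ Fin n → ℂ) :
    ∑ p, ‖(Umat m n *ᵥ z) p‖ ^ 2 = ∑ i, ∑ j, ‖z (inl i) - z (inr j)‖ ^ 2 := by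
  simp only [Umat_mulVec_apply, Fintype.sum_prod_type]

theorem sum_norm_Umat_mulVec_sq_le (m n : ℕ) (z : Fin m ⊕ Fin n → ℂ) :
    ∑ p, ‖(Umat m n *ᵥ z) p‖ ^ 2 ≤ (m + n) * ∑ q, ‖z q‖ ^ 2 := by
  simpa only [sum_norm_Umat_mulVec_sq, Fintype.card_fin] using sum_sum_norm_inl_sub_inr_sq_le z

theorem sum_norm_Umat_mulVec_elim_sq (m n : ℕ) :
    let z : Fin m ⊕ Fin n → ℂ := Sum.elim (fun _ ↦ n) (fun _ ↦ -m)
    ∑ p, ‖(Umat m n *ᵥ z) p‖ ^ 2 = (m + n) * ∑ q, ‖z q‖ ^ 2 := by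
  have balanced : Fintype.card (Fin m) • (n : ℂ) + Fintype.card (Fin n) • (-m : ℂ) = 0 := by
    simp only [Fintype.card_fin, nsmul_eq_mul]
    ring
  simpa only [sum_norm_Umat_mulVec_sq, Fintype.card_fin, elim_inl, elim_inr] using
    sum_sum_norm_sub_sq_eq_of_card_smul_add_eq_zero balanced

/-- The largest singular value of `U` equals `√(m+n)`: `‖Uz‖₂ ≤ √(m+n)·‖z‖₂` for
all `z`, with equality attained by some nonzero `z`. -/
theorem largest_singular_value_U (m n : ℕ) (hm : 0 < m) (hn : 0 < n) :
    (∀ z : Fin m ⊕ Fin n → ℂ,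
      Real.sqrt (∑ p, ‖(Umat m n).mulVec z p‖ ^ 2) ≤
        Real.sqrt (m + n) * Real.sqrt (∑ q, ‖z q‖ ^ 2)) ∧
    ∃ z : Fin m ⊕ Fin n → ℂ, z ≠ 0 ∧
      Real.sqrt (∑ p, ‖(Umat m n).mulVec z p‖ ^ 2) =
        Real.sqrt (m + n) * Real.sqrt (∑ q, ‖z q‖ ^ 2) := by
  have sqrt_rhs (z : Fin m ⊕ Fin n → ℂ) :
      √(m + n) * √(∑ q, ‖z q‖ ^ 2) = √((m + n) * ∑ q, ‖z q‖ ^ 2) :=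
    (Real.sqrt_mul (by positivity) _).symm
  simp only [sqrt_rhs]
  refine ⟨fun z ↦ Real.sqrt_le_sqrt (sum_norm_Umat_mulVec_sq_le m n z),
    Sum.elim (fun _ ↦ n) (fun _ ↦ -m), fun z_eq_zero ↦ ?_,
    congrArg Real.sqrt (sum_norm_Umat_mulVec_elim_sq m n)⟩
  have n_eq_zero : (n : ℂ) = 0 := congrFun z_eq_zero (inl ⟨0, hm⟩)
  exact hn.ne' (Nat.cast_eq_zero.mp n_eq_zero)
end

section
/- Least squares optimality of the explicit solution: let A = [a_{ij}] ∈ ℂ^{m,n} have all entries nonzero, and define r ∈ ℂ^m by r_i = (1/n)∑_j 1/a_{ij}, c ∈ ℂ^n by c_j = (1/m)∑_i 1/a_{ij}, and σ = (1/(mn))∑_{i,j} 1/a_{ij}. Set ŝ = r − (mσ/(m+n))·1_m and t̂ = −c + (nσ/(m+n))·1_n. Then for all s ∈ ℂ^m, t ∈ ℂ^n, one has ∑_{i,j} |ŝ_i − t̂_j − 1/a_{ij}|² ≤ ∑_{i,j} |s_i − t_j − 1/a_{ij}|². -/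
/-!
The array `(ŝ i - t̂ j)` is row mean plus column mean minus grand mean, so its residual against the
data has vanishing row and column sums. Such a residual is orthogonal to every array of the form
`(u i - v j)`, and by Pythagoras moving away from `(ŝ, t̂)` only adds a square.
-/

open scoped BigOperators

section AdditiveFit

variable {ι κ M : Type*} [Fintype ι] [Fintype κ] [AddCommGroup M] [Module ℚ≥0 M]

/-- The additive fit of a two-way array: row mean plus column mean minus grand mean. For entries in
an inner product space it is the orthogonal projection of `B` onto the arrays `(s i - t j)`. -/
def additiveFit (B : ι → κ → M) (i : ι) (j : κ) : M :=
  𝔼 j', B i j' + 𝔼 i', B i' j - 𝔼 i', 𝔼 j', B i' j'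

/-- The row part `ŝ` of the additive fit. Since `(s, t)` is determined by `(s i - t j)` only up to a
common constant, the multiple of the grand mean is chosen so that `∑ ŝ + ∑ t̂ = 0`. -/
def rowFit (B : ι → κ → M) (i : ι) : M :=
  𝔼 j, B i j
    - (Fintype.card ι / (Fintype.card ι + Fintype.card κ) : ℚ≥0) • 𝔼 i', 𝔼 j, B i' j

/-- The column part `t̂` of the additive fit, which enters it with a minus sign; see `rowFit` for
the choice of the additive constant. -/
def colFit (B : ι → κ → M) (j : κ) : M :=
  -𝔼 i, B i j
    + (Fintype.card κ / (Fintype.card ι + Fintype.card κ) : ℚ≥0) • 𝔼 i, 𝔼 j', B i j'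

theorem rowFit_sub_colFit (B : ι → κ → M) (i : ι) (j : κ) :
    rowFit B i - colFit B j = additiveFit B i j := by
  have : Nonempty ι := ⟨i⟩
  have grandMean_split :
      (Fintype.card ι / (Fintype.card ι + Fintype.card κ) : ℚ≥0) • 𝔼 i', 𝔼 j', B i' j'
        + (Fintype.card κ / (Fintype.card ι + Fintype.card κ) : ℚ≥0) • 𝔼 i', 𝔼 j', B i' j'
      = 𝔼 i', 𝔼 j', B i' j' := by
    rw [← add_smul, ← add_div, div_self (by positivity), one_smul]
  rw [rowFit, colFit, additiveFit]
  conv_rhs => rw [← grandMean_split]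
  abel

theorem additiveFit_flip (B : ι → κ → M) (i : ι) (j : κ) :
    additiveFit (flip B) j i = additiveFit B i j := by
  simp only [additiveFit, flip, Finset.expect_comm (s := (Finset.univ : Finset κ)),
    add_comm (𝔼 i', B i' j)]

theorem sum_additiveFit_right (B : ι → κ → M) (i : ι) :
    ∑ j, additiveFit B i j = ∑ j, B i j := by
  have sum_colMean : ∑ j, 𝔼 i', B i' j = Fintype.card κ • 𝔼 i', 𝔼 j', B i' j' := by
    rw [Finset.expect_comm, Fintype.card_smul_expect]
  simp only [additiveFit, Finset.sum_sub_distrib, Finset.sum_add_distrib, sum_colMean,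
    Finset.sum_const, Finset.card_univ, Fintype.card_smul_expect, add_sub_cancel_right]

theorem sum_additiveFit_left (B : ι → κ → M) (j : κ) :
    ∑ i, additiveFit B i j = ∑ i, B i j := by
  simpa only [additiveFit_flip, flip] using sum_additiveFit_right (flip B) j

end AdditiveFit

section ClosedForm

variable {ι κ : Type*} [Fintype ι] [Fintype κ]

theorem expect_expect_eq_inv_mul_sum_sum {K : Type*} [Semifield K] [CharZero K] (B : ι → κ → K) :
    𝔼 i, 𝔼 j, B i j = ((Fintype.card ι : K) * Fintype.card κ)⁻¹ * ∑ i, ∑ j, B i j := by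
  simp only [Fintype.expect_eq_sum_div_card, ← Finset.sum_div]
  ring

variable {K : Type*} [Field K] [CharZero K]

theorem rowFit_eq_sum (B : ι → κ → K) (i : ι) :
    rowFit B i = (Fintype.card κ : K)⁻¹ * ∑ j, B i j
      - (Fintype.card ι : K) * (((Fintype.card ι : K) * Fintype.card κ)⁻¹ * ∑ i', ∑ j, B i' j)
        / ((Fintype.card ι : K) + Fintype.card κ) := by
  rw [rowFit, expect_expect_eq_inv_mul_sum_sum, Fintype.expect_eq_sum_div_card, NNRat.smul_def]
  push_cast
  ring

theorem colFit_eq_sum (B : ι → κ → K) (j : κ) :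
    colFit B j = -((Fintype.card ι : K)⁻¹ * ∑ i, B i j)
      + (Fintype.card κ : K) * (((Fintype.card ι : K) * Fintype.card κ)⁻¹ * ∑ i, ∑ j', B i j')
        / ((Fintype.card ι : K) + Fintype.card κ) := by
  rw [colFit, expect_expect_eq_inv_mul_sum_sum, Fintype.expect_eq_sum_div_card, NNRat.smul_def]
  push_cast
  ring

end ClosedForm

section LeastSquares

variable {ι κ : Type*} [Fintype ι] [Fintype κ]

theorem sum_sum_inner_sub_eq_zero {𝕜 F : Type*} [RCLike 𝕜] [SeminormedAddCommGroup F]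
    [InnerProductSpace 𝕜 F] {e : ι → κ → F} (hrow : ∀ i, ∑ j, e i j = 0)
    (hcol : ∀ j, ∑ i, e i j = 0) (u : ι → F) (v : κ → F) :
    ∑ i, ∑ j, inner 𝕜 (e i j) (u i - v j) = 0 := by
  have row_part : ∑ i, ∑ j, inner 𝕜 (e i j) (u i) = 0 := by
    simp only [← sum_inner, hrow, inner_zero_left, Finset.sum_const_zero]
  have col_part : ∑ i, ∑ j, inner 𝕜 (e i j) (v j) = 0 := by
    rw [Finset.sum_comm]
    simp only [← sum_inner, hcol, inner_zero_left, Finset.sum_const_zero]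
  simp only [inner_sub_right, Finset.sum_sub_distrib, row_part, col_part, sub_zero]

variable {E : Type*} [SeminormedAddCommGroup E] [InnerProductSpace ℝ E]

theorem sum_sum_norm_add_sub_sq {e : ι → κ → E} (hrow : ∀ i, ∑ j, e i j = 0)
    (hcol : ∀ j, ∑ i, e i j = 0) (u : ι → E) (v : κ → E) :
    ∑ i, ∑ j, ‖e i j + (u i - v j)‖ ^ 2 =
      ∑ i, ∑ j, ‖e i j‖ ^ 2 + ∑ i, ∑ j, ‖u i - v j‖ ^ 2 := by
  simp only [norm_add_sq_real, Finset.sum_add_distrib, ← Finset.mul_sum,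
    sum_sum_inner_sub_eq_zero hrow hcol, mul_zero, add_zero]

variable [Module ℚ≥0 E]

theorem least_squares_optimality_general (B : ι → κ → E) (s : ι → E) (t : κ → E) :
    ∑ i, ∑ j, ‖rowFit B i - colFit B j - B i j‖ ^ 2 ≤ ∑ i, ∑ j, ‖s i - t j - B i j‖ ^ 2 := by
  have hrow (i : ι) : ∑ j, (rowFit B i - colFit B j - B i j) = 0 := by
    simp only [rowFit_sub_colFit, Finset.sum_sub_distrib, sum_additiveFit_right, sub_self]
  have hcol (j : κ) : ∑ i, (rowFit B i - colFit B j - B i j) = 0 := by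
    simp only [rowFit_sub_colFit, Finset.sum_sub_distrib, sum_additiveFit_left, sub_self]
  have residual_split (i : ι) (j : κ) : s i - t j - B i j =
      rowFit B i - colFit B j - B i j + ((s i - rowFit B i) - (t j - colFit B j)) := by
    abel
  simp only [residual_split, sum_sum_norm_add_sub_sq hrow hcol]
  exact le_add_of_nonneg_right (by positivity)

end LeastSquares

/-- Least squares optimality of the explicit solution: with `r, c, σ` the row,
column and overall means of `A^{[-1]}`, the vectors `ŝ = r − (mσ/(m+n))·1_m`,
`t̂ = −c + (nσ/(m+n))·1_n` minimize `∑_{i,j} |s_i − t_j − 1/a_{ij}|²`. -/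
theorem least_squares_optimality (m n : ℕ) (hm : 0 < m) (hn : 0 < n)
    (A : Matrix (Fin m) (Fin n) ℂ) (hA : ∀ i j, A i j ≠ 0)
    (r : Fin m → ℂ) (hr : ∀ i, r i = (n : ℂ)⁻¹ * ∑ j, (A i j)⁻¹)
    (c : Fin n → ℂ) (hc : ∀ j, c j = (m : ℂ)⁻¹ * ∑ i, (A i j)⁻¹)
    (σ : ℂ) (hσ : σ = ((m : ℂ) * n)⁻¹ * ∑ i, ∑ j, (A i j)⁻¹)
    (sh : Fin m → ℂ) (hsh : ∀ i, sh i = r i - (m : ℂ) * σ / ((m : ℂ) + n))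
    (th : Fin n → ℂ) (hth : ∀ j, th j = -c j + (n : ℂ) * σ / ((m : ℂ) + n)) :
    ∀ (s : Fin m → ℂ) (t : Fin n → ℂ),
      ∑ i, ∑ j, ‖sh i - th j - (A i j)⁻¹‖ ^ 2 ≤
        ∑ i, ∑ j, ‖s i - t j - (A i j)⁻¹‖ ^ 2 := by
  intro s t
  simpa only [hsh, hth, hr, hc, hσ, rowFit_eq_sum, colFit_eq_sum, Fintype.card_fin] using
    least_squares_optimality_general (fun i j => (A i j)⁻¹) s t
end

section
/- Minimum-norm property of the explicit least squares solution: let A = [a_{ij}] ∈ ℂ^{m,n} have all entries nonzero, and define r ∈ ℂ^m by r_i = (1/n)∑_j 1/a_{ij}, c ∈ ℂ^n by c_j = (1/m)∑_i 1/a_{ij}, and σ = (1/(mn))∑_{i,j} 1/a_{ij}. Set ŝ = r − (mσ/(m+n))·1_m and t̂ = −c + (nσ/(m+n))·1_n. Then ∑_i ŝ_i + ∑_j t̂_j = 0, and for every other minimizer (s,t) of ∑_{i,j} |s_i − t_j − 1/a_{ij}|², one has ‖[ŝ; t̂]‖₂ ≤ ‖[s; t]‖₂. -/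
/-!
The residuals of `(ŝ, t̂)` have vanishing row and column sums, so they are orthogonal to every
array of the form `x i - y j`. Pythagoras then shows that `(ŝ, t̂)` is a minimizer and that any
other minimizer `(s, t)` satisfies `s i - ŝ i = t j - t̂ j` for all `i`, `j`, i.e. it is obtained by
adding one constant to all coordinates. Such a shift is orthogonal to the zero-sum vector
`[ŝ; t̂]`, so it can only increase the norm.
-/

open Finset
open scoped BigOperators InnerProductSpace

variable {ι κ E : Type*} [Fintype ι] [Fintype κ]

section Estimates

variable [AddCommGroup E]

/-- The normal equations of the least squares problem `s i - t j ≈ b i j`: the residuals have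
vanishing row sums and column sums. -/
structure NormalEquations (b : ι → κ → E) (s : ι → E) (t : κ → E) : Prop where
  row_sum_eq_zero : ∀ i, ∑ j, (s i - t j - b i j) = 0
  col_sum_eq_zero : ∀ j, ∑ i, (s i - t j - b i j) = 0

variable [Module ℝ E] [Module ℚ≥0 E]

/-- The vector `ŝ = r - (mσ / (m + n)) 1` of the explicit least squares solution for an `m × n`
array `b`, where `r` is the vector of row means and `σ` the mean of all entries. -/
noncomputable def rowEstimate (b : ι → κ → E) (i : ι) : E :=
  𝔼 j, b i j -
    (Fintype.card ι / (Fintype.card ι + Fintype.card κ) : ℝ) • 𝔼 i', 𝔼 j, b i' j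

/-- The vector `t̂ = -c + (nσ / (m + n)) 1` of the explicit least squares solution for an `m × n`
array `b`, where `c` is the vector of column means and `σ` the mean of all entries. -/
noncomputable def colEstimate (b : ι → κ → E) (j : κ) : E :=
  -𝔼 i, b i j +
    (Fintype.card κ / (Fintype.card ι + Fintype.card κ) : ℝ) • 𝔼 i, 𝔼 j', b i j'

theorem colEstimate_eq_neg_rowEstimate_flip (b : ι → κ → E) (j : κ) :
    colEstimate b j = -rowEstimate (flip b) j := by
  simp only [colEstimate, rowEstimate, flip, expect_comm (s := (univ : Finset ι)),
    add_comm (Fintype.card ι : ℝ)]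
  abel

theorem sum_rowEstimate (b : ι → κ → E) :
    ∑ i, rowEstimate b i =
      (Fintype.card ι * Fintype.card κ / (Fintype.card ι + Fintype.card κ) : ℝ) •
        𝔼 i, 𝔼 j, b i j := by
  obtain _ | _ := isEmpty_or_nonempty ι
  · simp
  have hrows : ∑ i, 𝔼 j, b i j = (Fintype.card ι : ℝ) • 𝔼 i, 𝔼 j, b i j := by
    rw [Nat.cast_smul_eq_nsmul, Fintype.card_smul_expect]
  simp only [rowEstimate, sum_sub_distrib, hrows, sum_const, card_univ,
    ← Nat.cast_smul_eq_nsmul ℝ, smul_smul, ← sub_smul]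
  congr 1
  field_simp
  ring

theorem sum_colEstimate (b : ι → κ → E) :
    ∑ j, colEstimate b j = -∑ i, rowEstimate b i := by
  simp only [colEstimate_eq_neg_rowEstimate_flip, sum_neg_distrib, sum_rowEstimate, flip,
    expect_comm (s := (univ : Finset κ)), mul_comm (Fintype.card κ : ℝ),
    add_comm (Fintype.card κ : ℝ)]

theorem sum_rowEstimate_sub_colEstimate_sub (b : ι → κ → E) (i : ι) :
    ∑ j, (rowEstimate b i - colEstimate b j - b i j) = 0 := by
  have hrow : ∑ j, b i j = (Fintype.card κ : ℝ) • 𝔼 j, b i j := by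
    rw [Nat.cast_smul_eq_nsmul, Fintype.card_smul_expect]
  rw [sum_sub_distrib, sum_sub_distrib, sum_colEstimate, sum_rowEstimate, hrow, sum_const,
    card_univ, ← Nat.cast_smul_eq_nsmul ℝ, rowEstimate]
  module

theorem normalEquations_estimates (b : ι → κ → E) :
    NormalEquations b (rowEstimate b) (colEstimate b) where
  row_sum_eq_zero := sum_rowEstimate_sub_colEstimate_sub b
  col_sum_eq_zero j := by
    rw [← sum_rowEstimate_sub_colEstimate_sub (flip b) j]
    refine sum_congr rfl fun i _ => ?_
    rw [colEstimate_eq_neg_rowEstimate_flip, colEstimate_eq_neg_rowEstimate_flip, flip_flip, flip]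
    abel

theorem rowEstimate_eq (b : ι → κ → ℂ) (i : ι) :
    rowEstimate b i = (Fintype.card κ : ℂ)⁻¹ * ∑ j, b i j -
      Fintype.card ι * ((Fintype.card ι * Fintype.card κ : ℂ)⁻¹ * ∑ i, ∑ j, b i j) /
        (Fintype.card ι + Fintype.card κ) := by
  simp only [rowEstimate, Fintype.expect_eq_sum_div_card, ← sum_div, Complex.real_smul]
  push_cast
  ring

theorem colEstimate_eq (b : ι → κ → ℂ) (j : κ) :
    colEstimate b j = -((Fintype.card ι : ℂ)⁻¹ * ∑ i, b i j) +
      Fintype.card κ * ((Fintype.card ι * Fintype.card κ : ℂ)⁻¹ * ∑ i, ∑ j, b i j) /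
        (Fintype.card ι + Fintype.card κ) := by
  simp only [colEstimate, Fintype.expect_eq_sum_div_card, ← sum_div, Complex.real_smul]
  push_cast
  ring

end Estimates

section MinNorm

variable [NormedAddCommGroup E]

/-- The least squares objective for approximating the array `b` by the differences `s i - t j`. -/
def sumSqResidual (b : ι → κ → E) (s : ι → E) (t : κ → E) : ℝ :=
  ∑ i, ∑ j, ‖s i - t j - b i j‖ ^ 2

variable [InnerProductSpace ℝ E]

theorem sum_sum_inner_sub_eq_zero_s13 {w : ι → κ → E} (hrow : ∀ i, ∑ j, w i j = 0)
    (hcol : ∀ j, ∑ i, w i j = 0) (x : ι → E) (y : κ → E) :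
    ∑ i, ∑ j, ⟪w i j, x i - y j⟫_ℝ = 0 := by
  have hx : ∑ i, ∑ j, ⟪w i j, x i⟫_ℝ = 0 := by
    simp only [← sum_inner, hrow, inner_zero_left, sum_const_zero]
  have hy : ∑ i, ∑ j, ⟪w i j, y j⟫_ℝ = 0 := by
    rw [sum_comm]
    simp only [← sum_inner, hcol, inner_zero_left, sum_const_zero]
  simp only [inner_sub_right, sum_sub_distrib, hx, hy, sub_zero]

theorem sum_norm_sq_le_sum_norm_add_sq {x : ι → E} (hx : ∑ i, x i = 0) (k : E) :
    ∑ i, ‖x i‖ ^ 2 ≤ ∑ i, ‖x i + k‖ ^ 2 := by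
  have hcross : ∑ i, ⟪x i, k⟫_ℝ = 0 := by rw [← sum_inner, hx, inner_zero_left]
  simp only [norm_add_sq_real, sum_add_distrib, ← mul_sum, hcross, mul_zero, add_zero]
  exact le_add_of_nonneg_right (by positivity)

namespace NormalEquations

variable {b : ι → κ → E} {s s' : ι → E} {t t' : κ → E}

theorem sumSqResidual_eq_add (h : NormalEquations b s t) (s' : ι → E) (t' : κ → E) :
    sumSqResidual b s' t' =
      sumSqResidual b s t + ∑ i, ∑ j, ‖(s' i - s i) - (t' j - t j)‖ ^ 2 := by
  have hcross : ∑ i, ∑ j, ⟪s i - t j - b i j, (s' i - s i) - (t' j - t j)⟫_ℝ = 0 :=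
    sum_sum_inner_sub_eq_zero_s13 h.row_sum_eq_zero h.col_sum_eq_zero
      (fun i => s' i - s i) (fun j => t' j - t j)
  have hsplit (i j) : s' i - t' j - b i j =
      (s i - t j - b i j) + ((s' i - s i) - (t' j - t j)) := by abel
  simp only [sumSqResidual, hsplit, norm_add_sq_real, sum_add_distrib, ← mul_sum, hcross,
    mul_zero, add_zero]

theorem sumSqResidual_le (h : NormalEquations b s t) (s' : ι → E) (t' : κ → E) :
    sumSqResidual b s t ≤ sumSqResidual b s' t' := by
  rw [h.sumSqResidual_eq_add s' t']
  exact le_add_of_nonneg_right (by positivity)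

theorem sub_eq_sub_of_sumSqResidual_le (h : NormalEquations b s t)
    (hle : sumSqResidual b s' t' ≤ sumSqResidual b s t) (i : ι) (j : κ) :
    s' i - s i = t' j - t j := by
  have hzero : ∑ p : ι × κ, ‖(s' p.1 - s p.1) - (t' p.2 - t p.2)‖ ^ 2 = 0 := by
    rw [Fintype.sum_prod_type]
    refine le_antisymm ?_ (by positivity)
    linarith [h.sumSqResidual_eq_add s' t']
  have hterm := (sum_eq_zero_iff_of_nonneg fun _ _ => by positivity).mp hzero (i, j) (mem_univ _)
  simpa [sub_eq_zero] using hterm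

theorem exists_eq_add_of_sumSqResidual_le [Nonempty ι] [Nonempty κ] (h : NormalEquations b s t)
    (hle : sumSqResidual b s' t' ≤ sumSqResidual b s t) :
    ∃ k, (∀ i, s' i = s i + k) ∧ ∀ j, t' j = t j + k := by
  have hsub := h.sub_eq_sub_of_sumSqResidual_le hle
  obtain ⟨i₀⟩ := ‹Nonempty ι›
  obtain ⟨j₀⟩ := ‹Nonempty κ›
  refine ⟨t' j₀ - t j₀, fun i => ?_, fun j => ?_⟩
  · rw [← hsub i j₀, add_sub_cancel]
  · rw [← hsub i₀ j₀, hsub i₀ j, add_sub_cancel]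

theorem sum_norm_sq_le [Nonempty ι] [Nonempty κ] (h : NormalEquations b s t)
    (hsum : ∑ i, s i + ∑ j, t j = 0) (hle : sumSqResidual b s' t' ≤ sumSqResidual b s t) :
    ∑ i, ‖s i‖ ^ 2 + ∑ j, ‖t j‖ ^ 2 ≤ ∑ i, ‖s' i‖ ^ 2 + ∑ j, ‖t' j‖ ^ 2 := by
  obtain ⟨k, hs, ht⟩ := h.exists_eq_add_of_sumSqResidual_le hle
  have hshift := sum_norm_sq_le_sum_norm_add_sq (x := Sum.elim s t)
    (by simpa [Fintype.sum_sum_type] using hsum) k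
  simpa [Fintype.sum_sum_type, hs, ht] using hshift

end NormalEquations

theorem least_squares_min_norm_general [Module ℚ≥0 E] [Nonempty ι] [Nonempty κ]
    (b : ι → κ → E) :
    (∑ i, rowEstimate b i + ∑ j, colEstimate b j = 0) ∧
    (∀ s t, sumSqResidual b (rowEstimate b) (colEstimate b) ≤ sumSqResidual b s t) ∧
    ∀ s t, (∀ s' t', sumSqResidual b s t ≤ sumSqResidual b s' t') →
      √(∑ i, ‖rowEstimate b i‖ ^ 2 + ∑ j, ‖colEstimate b j‖ ^ 2) ≤
        √(∑ i, ‖s i‖ ^ 2 + ∑ j, ‖t j‖ ^ 2) := by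
  have hnormal := normalEquations_estimates b
  have hsum : ∑ i, rowEstimate b i + ∑ j, colEstimate b j = 0 := by
    rw [sum_colEstimate, add_neg_cancel]
  exact ⟨hsum, hnormal.sumSqResidual_le, fun s t hmin =>
    Real.sqrt_le_sqrt (hnormal.sum_norm_sq_le hsum (hmin _ _))⟩

end MinNorm

/-- Minimum-norm property of the explicit least squares solution: the explicit
solution `ŝ, t̂` satisfies `∑ ŝ_i + ∑ t̂_j = 0`, and among all minimizers of
`∑_{i,j} |s_i − t_j − 1/a_{ij}|²` it has the least Euclidean norm. -/
theorem least_squares_min_norm (m n : ℕ) (hm : 0 < m) (hn : 0 < n)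
    (A : Matrix (Fin m) (Fin n) ℂ) (hA : ∀ i j, A i j ≠ 0)
    (r : Fin m → ℂ) (hr : ∀ i, r i = (n : ℂ)⁻¹ * ∑ j, (A i j)⁻¹)
    (c : Fin n → ℂ) (hc : ∀ j, c j = (m : ℂ)⁻¹ * ∑ i, (A i j)⁻¹)
    (σ : ℂ) (hσ : σ = ((m : ℂ) * n)⁻¹ * ∑ i, ∑ j, (A i j)⁻¹)
    (sh : Fin m → ℂ) (hsh : ∀ i, sh i = r i - (m : ℂ) * σ / ((m : ℂ) + n))
    (th : Fin n → ℂ) (hth : ∀ j, th j = -c j + (n : ℂ) * σ / ((m : ℂ) + n)) :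
    ((∑ i, sh i) + ∑ j, th j = 0) ∧
    ∀ (s : Fin m → ℂ) (t : Fin n → ℂ),
      (∀ (s' : Fin m → ℂ) (t' : Fin n → ℂ),
        ∑ i, ∑ j, ‖s i - t j - (A i j)⁻¹‖ ^ 2 ≤
          ∑ i, ∑ j, ‖s' i - t' j - (A i j)⁻¹‖ ^ 2) →
      Real.sqrt ((∑ i, ‖sh i‖ ^ 2) + ∑ j, ‖th j‖ ^ 2) ≤
        Real.sqrt ((∑ i, ‖s i‖ ^ 2) + ∑ j, ‖t j‖ ^ 2) := by
  have : NeZero m := ⟨hm.ne'⟩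
  have : NeZero n := ⟨hn.ne'⟩
  obtain rfl : sh = rowEstimate fun i j => (A i j)⁻¹ :=
    funext fun i => by simp only [hsh, hr, hσ, rowEstimate_eq, Fintype.card_fin]
  obtain rfl : th = colEstimate fun i j => (A i j)⁻¹ :=
    funext fun j => by simp only [hth, hc, hσ, colEstimate_eq, Fintype.card_fin]
  obtain ⟨hsum, -, hnorm⟩ := least_squares_min_norm_general fun i j => (A i j)⁻¹
  exact ⟨hsum, hnorm⟩
end

section
/- Lower bound on point separation from a small linearization residual: let A = [a_{ij}] ∈ ℂ^{m,n} have all entries nonzero, let s ∈ ℂ^m, t ∈ ℂ^n, and let R = [r_{ij}] with r_{ij} = 1/a_{ij} − (s_i − t_j). If β := max_{i,j} |a_{ij} r_{ij}| < 1, then |s_i − t_j| ≥ (1 − β)/max_{k,l}|a_{kl}| for all i, j; in particular s, t are Cauchy points. -/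
/-!
Multiplying the residual by the entry gives `a r = 1 - a x` with `x = s_i - t_j`, so smallness of
`a r` says that `a x` is close to `1`. The reverse triangle inequality then keeps `‖a‖ ‖x‖`, and
with it `‖x‖`, away from `0`.
-/

theorem one_sub_norm_one_sub_mul_le {𝕜 : Type*} [SeminormedRing 𝕜] [NormOneClass 𝕜] (a x : 𝕜) :
    1 - ‖1 - a * x‖ ≤ ‖a‖ * ‖x‖ := by
  calc 1 - ‖1 - a * x‖ = ‖(1 : 𝕜)‖ - ‖1 - a * x‖ := by rw [norm_one]
    _ ≤ ‖1 - (1 - a * x)‖ := norm_sub_norm_le _ _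
    _ = ‖a * x‖ := by rw [sub_sub_cancel]
    _ ≤ ‖a‖ * ‖x‖ := norm_mul_le a x

theorem one_sub_div_le_norm_of_norm_mul_inv_sub_le {𝕜 : Type*} [NormedDivisionRing 𝕜] {a x : 𝕜}
    {β M : ℝ} (ha : a ≠ 0) (hβ : ‖a * (a⁻¹ - x)‖ ≤ β) (hM : ‖a‖ ≤ M) :
    (1 - β) / M ≤ ‖x‖ := by
  have hM_pos : 0 < M := (norm_pos_iff.mpr ha).trans_le hM
  rw [mul_sub, mul_inv_cancel₀ ha] at hβ
  rw [div_le_iff₀' hM_pos]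
  calc 1 - β ≤ 1 - ‖1 - a * x‖ := sub_le_sub_left hβ 1
    _ ≤ ‖a‖ * ‖x‖ := one_sub_norm_one_sub_mul_le a x
    _ ≤ M * ‖x‖ := by gcongr

theorem separation_lower_bound_general {ι κ 𝕜 : Type*} [NormedDivisionRing 𝕜]
    (A : Matrix ι κ 𝕜) (hA : ∀ i j, A i j ≠ 0) (s : ι → 𝕜) (t : κ → 𝕜)
    (R : Matrix ι κ 𝕜) (hR : ∀ i j, R i j = (A i j)⁻¹ - (s i - t j))
    {β M : ℝ} (hβ : ∀ i j, ‖A i j * R i j‖ ≤ β) (hM : ∀ i j, ‖A i j‖ ≤ M) :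
    (∀ i j, (1 - β) / M ≤ ‖s i - t j‖) ∧ (β < 1 → ∀ i j, s i - t j ≠ 0) := by
  have bound (i : ι) (j : κ) : (1 - β) / M ≤ ‖s i - t j‖ :=
    one_sub_div_le_norm_of_norm_mul_inv_sub_le (hA i j) (hR i j ▸ hβ i j) (hM i j)
  refine ⟨bound, fun hβ1 i j => norm_pos_iff.mp ?_⟩
  have hM_pos : 0 < M := (norm_pos_iff.mpr (hA i j)).trans_le (hM i j)
  exact (div_pos (sub_pos.mpr hβ1) hM_pos).trans_le (bound i j)

/-- Lower bound on point separation from a small linearization residual: if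
`β := max_{i,j} |a_{ij} r_{ij}| < 1` where `r_{ij} = 1/a_{ij} − (s_i − t_j)`,
then `|s_i − t_j| ≥ (1 − β)/max_{k,l}|a_{kl}|` for all `i, j`; in particular
`s, t` are Cauchy points. -/
theorem separation_lower_bound (m n : ℕ) (hm : 0 < m) (hn : 0 < n)
    (A : Matrix (Fin m) (Fin n) ℂ) (hA : ∀ i j, A i j ≠ 0)
    (s : Fin m → ℂ) (t : Fin n → ℂ)
    (R : Matrix (Fin m) (Fin n) ℂ) (hR : ∀ i j, R i j = (A i j)⁻¹ - (s i - t j))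
    (β : ℝ)
    (hβ : β = Finset.univ.sup' ⟨(⟨0, hm⟩, ⟨0, hn⟩), Finset.mem_univ _⟩
      (fun p : Fin m × Fin n => ‖A p.1 p.2 * R p.1 p.2‖))
    (hβ1 : β < 1) :
    (∀ i j, (1 - β) / (Finset.univ.sup' ⟨(⟨0, hm⟩, ⟨0, hn⟩), Finset.mem_univ _⟩
        (fun p : Fin m × Fin n => ‖A p.1 p.2‖)) ≤
      ‖s i - t j‖) ∧
    ∀ i j, s i - t j ≠ 0 := by
  refine (separation_lower_bound_general A hA s t R hR (fun i j => ?_)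
    (fun i j => ?_)).imp_right (· hβ1)
  · exact hβ ▸ Finset.le_sup' (fun p : Fin m × Fin n => ‖A p.1 p.2 * R p.1 p.2‖)
      (Finset.mem_univ (i, j))
  · exact Finset.le_sup' (fun p : Fin m × Fin n => ‖A p.1 p.2‖) (Finset.mem_univ (i, j))
end

section
/- Residual bound for the linearized Cauchy approximation: let A = [a_{ij}] ∈ ℂ^{m,n} have all entries nonzero, let s ∈ ℂ^m, t ∈ ℂ^n, and let R = [r_{ij}] with r_{ij} = 1/a_{ij} − (s_i − t_j). If β := max_{i,j} |a_{ij} r_{ij}| < 1, then s, t are Cauchy points and ‖A − C(s,t)‖_F ≤ (β/(1−β))·‖A‖_F, i.e., (∑_{i,j} |a_{ij} − 1/(s_i − t_j)|²)^{1/2} ≤ (β/(1−β))·(∑_{i,j}|a_{ij}|²)^{1/2}. -/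
/-!
Write `d = s i - t j` and `a = A i j`. The residual satisfies `a r = 1 - a d`, so the hypothesis
says that `a d` is within `β < 1` of `1`. Hence `d ≠ 0` and `‖a‖ ‖d‖ ≥ 1 - β`, and the factorization
`a - d⁻¹ = -(1 - a d) d⁻¹` bounds the entrywise error by `β ‖d⁻¹‖ ≤ β / (1 - β) * ‖a‖`.
-/

theorem one_sub_le_norm_of_norm_one_sub_le {E : Type*} [SeminormedAddCommGroup E] [One E]
    [NormOneClass E] {x : E} {β : ℝ} (h : ‖1 - x‖ ≤ β) : 1 - β ≤ ‖x‖ := by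
  have htri : ‖(1 : E)‖ - ‖x‖ ≤ ‖1 - x‖ := norm_sub_norm_le 1 x
  rw [norm_one] at htri
  linarith

theorem right_ne_zero_of_norm_one_sub_mul_lt_one {E : Type*} [SeminormedRing E]
    [NormOneClass E] {a d : E} (h : ‖1 - a * d‖ < 1) : d ≠ 0 := by
  rintro rfl
  simp at h

section ApproximateInverse

variable {𝕜 : Type*} [NormedDivisionRing 𝕜] {a d : 𝕜} {β : ℝ}

theorem norm_inv_le_of_norm_one_sub_mul_le (h : ‖1 - a * d‖ ≤ β) (hβ : β < 1) :
    ‖d⁻¹‖ ≤ ‖a‖ / (1 - β) := by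
  have hd : 0 < ‖d‖ :=
    norm_pos_iff.mpr (right_ne_zero_of_norm_one_sub_mul_lt_one (h.trans_lt hβ))
  have hlower : 1 - β ≤ ‖a‖ * ‖d‖ := norm_mul a d ▸ one_sub_le_norm_of_norm_one_sub_le h
  rw [norm_inv, inv_eq_one_div, div_le_div_iff₀ hd (sub_pos.mpr hβ), one_mul]
  exact hlower

theorem norm_sub_inv_eq_norm_one_sub_mul_mul_norm_inv (hd : d ≠ 0) :
    ‖a - d⁻¹‖ = ‖1 - a * d‖ * ‖d⁻¹‖ := by
  rw [← norm_mul, sub_mul, one_mul, mul_inv_cancel_right₀ hd, norm_sub_rev]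

theorem norm_sub_inv_le_of_norm_one_sub_mul_le (h : ‖1 - a * d‖ ≤ β) (hβ : β < 1) :
    ‖a - d⁻¹‖ ≤ β / (1 - β) * ‖a‖ := by
  have hβ₀ : 0 ≤ β := (norm_nonneg _).trans h
  have hd : d ≠ 0 := right_ne_zero_of_norm_one_sub_mul_lt_one (h.trans_lt hβ)
  calc ‖a - d⁻¹‖ = ‖1 - a * d‖ * ‖d⁻¹‖ := norm_sub_inv_eq_norm_one_sub_mul_mul_norm_inv hd
    _ ≤ β * (‖a‖ / (1 - β)) := by
        gcongr
        exact norm_inv_le_of_norm_one_sub_mul_le h hβ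
    _ = β / (1 - β) * ‖a‖ := by ring

end ApproximateInverse

theorem sqrt_sum_norm_sq_le_mul_sqrt_sum_norm_sq {ι E F : Type*} [SeminormedAddCommGroup E]
    [SeminormedAddCommGroup F] {u : Finset ι} {f : ι → E} {g : ι → F} {c : ℝ}
    (h : ∀ i ∈ u, ‖f i‖ ≤ c * ‖g i‖) :
    √(∑ i ∈ u, ‖f i‖ ^ 2) ≤ c * √(∑ i ∈ u, ‖g i‖ ^ 2) := by
  rcases le_or_gt 0 c with hc | hc
  · calc √(∑ i ∈ u, ‖f i‖ ^ 2) ≤ √(∑ i ∈ u, (c * ‖g i‖) ^ 2) := by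
          gcongr with i hi
          exact h i hi
      _ = √(c ^ 2 * ∑ i ∈ u, ‖g i‖ ^ 2) := by simp only [mul_pow, Finset.mul_sum]
      _ = c * √(∑ i ∈ u, ‖g i‖ ^ 2) := by rw [Real.sqrt_mul (sq_nonneg c), Real.sqrt_sq hc]
  · have hg : ∀ i ∈ u, ‖g i‖ = 0 := fun i hi =>
      le_antisymm (nonpos_of_mul_nonneg_right ((norm_nonneg _).trans (h i hi)) hc) (norm_nonneg _)
    have hf : ∀ i ∈ u, ‖f i‖ = 0 := fun i hi =>
      le_antisymm (by simpa only [hg i hi, mul_zero] using h i hi) (norm_nonneg _)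
    rw [Finset.sum_eq_zero fun i hi => by rw [hf i hi, zero_pow two_ne_zero],
      Finset.sum_eq_zero fun i hi => by rw [hg i hi, zero_pow two_ne_zero], Real.sqrt_zero,
      mul_zero]

theorem residual_bound_general {𝕜 ι κ : Type*} [NormedDivisionRing 𝕜] [Fintype ι] [Fintype κ]
    {A : Matrix ι κ 𝕜} (hA : ∀ i j, A i j ≠ 0) {s : ι → 𝕜} {t : κ → 𝕜}
    {R : Matrix ι κ 𝕜} (hR : ∀ i j, R i j = (A i j)⁻¹ - (s i - t j))
    {β : ℝ} (hβ : ∀ i j, ‖A i j * R i j‖ ≤ β) (hβ1 : β < 1) :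
    (∀ i j, s i - t j ≠ 0) ∧
    √(∑ i, ∑ j, ‖A i j - (s i - t j)⁻¹‖ ^ 2) ≤ β / (1 - β) * √(∑ i, ∑ j, ‖A i j‖ ^ 2) := by
  have hAd : ∀ i j, ‖1 - A i j * (s i - t j)‖ ≤ β := fun i j => by
    simpa only [hR, mul_sub (A i j) (A i j)⁻¹, mul_inv_cancel₀ (hA i j)] using hβ i j
  refine ⟨fun i j => right_ne_zero_of_norm_one_sub_mul_lt_one ((hAd i j).trans_lt hβ1), ?_⟩
  simp only [← Fintype.sum_prod_type']
  exact sqrt_sum_norm_sq_le_mul_sqrt_sum_norm_sq fun p _ =>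
    norm_sub_inv_le_of_norm_one_sub_mul_le (hAd p.1 p.2) hβ1

/-- Residual bound for the linearized Cauchy approximation: if
`β := max_{i,j} |a_{ij} r_{ij}| < 1` where `r_{ij} = 1/a_{ij} − (s_i − t_j)`,
then `s, t` are Cauchy points and `‖A − C(s,t)‖_F ≤ (β/(1−β))·‖A‖_F`. -/
theorem residual_bound (m n : ℕ) (hm : 0 < m) (hn : 0 < n)
    (A : Matrix (Fin m) (Fin n) ℂ) (hA : ∀ i j, A i j ≠ 0)
    (s : Fin m → ℂ) (t : Fin n → ℂ)
    (R : Matrix (Fin m) (Fin n) ℂ) (hR : ∀ i j, R i j = (A i j)⁻¹ - (s i - t j))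
    (β : ℝ)
    (hβ : β = Finset.univ.sup' ⟨(⟨0, hm⟩, ⟨0, hn⟩), Finset.mem_univ _⟩
      (fun p : Fin m × Fin n => ‖A p.1 p.2 * R p.1 p.2‖))
    (hβ1 : β < 1) :
    (∀ i j, s i - t j ≠ 0) ∧
    Real.sqrt (∑ i, ∑ j, ‖A i j - (s i - t j)⁻¹‖ ^ 2) ≤
      β / (1 - β) * Real.sqrt (∑ i, ∑ j, ‖A i j‖ ^ 2) := by
  exact residual_bound_general hA hR (fun i j => hβ ▸ Finset.le_sup'
    (fun p : Fin m × Fin n => ‖A p.1 p.2 * R p.1 p.2‖) (Finset.mem_univ (i, j))) hβ1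
end
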